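/- Let A ∈ ℝ^{n×n} be nonsingular and 1 ≤ k ≤ d(A) − 1. If b ∈ ℝ^n is a unit norm k-th worst-case GMRES initial vector, r_k = GMRES(A, b, k), and s_k = GMRES(Aᵀ, r_k/‖r_k‖, k), then ‖s_k‖ = ‖r_k‖ = Ψ_k(A) and b = s_k / Ψ_k(A). -/

import Mathlib

open Polynomial Matrix

/-- The Euclidean norm of a real vector. -/
noncomputable def euclNorm {ι : Type*} [Fintype ι] (v : ι → ℝ) : ℝ :=
  Real.sqrt (∑ i, v i ^ 2)

/-- The Euclidean norm of a complex vector. -/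
noncomputable def euclNormC {ι : Type*} [Fintype ι] (v : ι → ℂ) : ℝ :=
  Real.sqrt (∑ i, ‖v i‖ ^ 2)

/-- The Euclidean inner product of two real vectors. -/
noncomputable def edot {ι : Type*} [Fintype ι] (u v : ι → ℝ) : ℝ := ∑ i, u i * v i

/-- `p ∈ π_k`: real polynomials of degree at most `k` with value `1` at the origin. -/
def IsPik (k : ℕ) (p : Polynomial ℝ) : Prop := p.natDegree ≤ k ∧ p.eval 0 = 1

/-- `p ∈ π_{k,ℂ}`: complex polynomials of degree at most `k` with value `1` at the origin. -/
def IsPikC (k : ℕ) (p : Polynomial ℂ) : Prop := p.natDegree ≤ k ∧ p.eval 0 = 1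

/-- The `k`-th GMRES residual norm `min_{p ∈ π_k} ‖p(A)v‖`. -/
noncomputable def gmresVal {ι : Type*} [Fintype ι] [DecidableEq ι]
    (A : Matrix ι ι ℝ) (k : ℕ) (v : ι → ℝ) : ℝ :=
  sInf {s : ℝ | ∃ p : Polynomial ℝ, IsPik k p ∧ s = euclNorm ((Polynomial.aeval A p).mulVec v)}

/-- The `k`-th worst-case GMRES approximation `Ψ_k(A) = max_{‖v‖=1} min_{p ∈ π_k} ‖p(A)v‖`. -/
noncomputable def Psi {ι : Type*} [Fintype ι] [DecidableEq ι]
    (A : Matrix ι ι ℝ) (k : ℕ) : ℝ :=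
  sSup {r : ℝ | ∃ v : ι → ℝ, euclNorm v = 1 ∧ r = gmresVal A k v}

/-- `d(A)`: the degree of the minimal polynomial of `A`. -/
noncomputable def dA {ι : Type*} [Fintype ι] [DecidableEq ι] (A : Matrix ι ι ℝ) : ℕ :=
  (minpoly ℝ A).natDegree

/-- `d(A,b)`: the smallest degree of a nonzero polynomial `q` with `q(A)b = 0`. -/
noncomputable def dAb {ι : Type*} [Fintype ι] [DecidableEq ι]
    (A : Matrix ι ι ℝ) (b : ι → ℝ) : ℕ :=
  sInf {d : ℕ | ∃ q : Polynomial ℝ, q ≠ 0 ∧ q.natDegree = d ∧ (Polynomial.aeval A q).mulVec b = 0}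

/-- `r = GMRES(A,b,k)`: `r = p(A)b` for some `p ∈ π_k` minimizing `‖p(A)b‖` over `π_k`. -/
def IsGmresRes {ι : Type*} [Fintype ι] [DecidableEq ι]
    (A : Matrix ι ι ℝ) (k : ℕ) (b r : ι → ℝ) : Prop :=
  ∃ p : Polynomial ℝ, IsPik k p ∧ r = (Polynomial.aeval A p).mulVec b ∧
    ∀ q : Polynomial ℝ, IsPik k q → euclNorm r ≤ euclNorm ((Polynomial.aeval A q).mulVec b)

/-- `p` is the `k`-th GMRES polynomial of `A` and `b`: `p ∈ π_k` minimizes `‖p(A)b‖`. -/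
def IsGmresPoly {ι : Type*} [Fintype ι] [DecidableEq ι]
    (A : Matrix ι ι ℝ) (k : ℕ) (b : ι → ℝ) (p : Polynomial ℝ) : Prop :=
  IsPik k p ∧ ∀ q : Polynomial ℝ, IsPik k q →
    euclNorm ((Polynomial.aeval A p).mulVec b) ≤ euclNorm ((Polynomial.aeval A q).mulVec b)

/-- The Krylov subspace `K_k(A,b) = span{b, Ab, …, A^{k-1}b}`. -/
noncomputable def krylov {ι : Type*} [Fintype ι] [DecidableEq ι]
    (A : Matrix ι ι ℝ) (k : ℕ) (b : ι → ℝ) : Submodule ℝ (ι → ℝ) :=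
  Submodule.span ℝ (Set.range fun i : Fin k => (A ^ (i : ℕ)).mulVec b)

/-- `b` satisfies the cross equality for `A` and step `k`. -/
def CrossEq {ι : Type*} [Fintype ι] [DecidableEq ι]
    (A : Matrix ι ι ℝ) (k : ℕ) (b : ι → ℝ) : Prop :=
  ∀ r s : ι → ℝ, IsGmresRes A k b r → IsGmresRes Aᵀ k ((euclNorm r)⁻¹ • r) s →
    b = (euclNorm s)⁻¹ • s

/-- The Krylov matrix `K(v) = [Av, A²v, …, A^k v]`. -/
noncomputable def Kmat {n : ℕ} (A : Matrix (Fin n) (Fin n) ℝ) (k : ℕ) (v : Fin n → ℝ) :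
    Matrix (Fin n) (Fin k) ℝ :=
  Matrix.of fun i j => (A ^ ((j : ℕ) + 1)).mulVec v i

/-- `γ(v) = (K(v)ᵀK(v))⁻¹ K(v)ᵀ v`. -/
noncomputable def gammaVec {n : ℕ} (A : Matrix (Fin n) (Fin n) ℝ) (k : ℕ) (v : Fin n → ℝ) :
    Fin k → ℝ :=
  ((Kmat A k v)ᵀ * Kmat A k v)⁻¹ *ᵥ ((Kmat A k v)ᵀ *ᵥ v)

/-- `g(v) = min_{c ∈ ℝ^k} ‖v - K(v)c‖²`. -/
noncomputable def gFun {n : ℕ} (A : Matrix (Fin n) (Fin n) ℝ) (k : ℕ) (v : Fin n → ℝ) : ℝ :=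
  sInf {s : ℝ | ∃ c : Fin k → ℝ, s = euclNorm (v - Kmat A k v *ᵥ c) ^ 2}

/-- `p(z; c) = 1 - ∑_{j=1}^k c_j z^j`. -/
noncomputable def pPoly {k : ℕ} (c : Fin k → ℝ) : Polynomial ℝ :=
  1 - ∑ j : Fin k, Polynomial.C (c j) * Polynomial.X ^ ((j : ℕ) + 1)

/-- `f(c,v) = ‖p(A;c)v‖²`. -/
noncomputable def fFun {n k : ℕ} (A : Matrix (Fin n) (Fin n) ℝ) (c : Fin k → ℝ)
    (v : Fin n → ℝ) : ℝ :=
  euclNorm ((Polynomial.aeval A (pPoly c)).mulVec v) ^ 2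

/-- `F(c,v) = f(c,v)/(vᵀv)`. -/
noncomputable def FFun {n k : ℕ} (A : Matrix (Fin n) (Fin n) ℝ) (c : Fin k → ℝ)
    (v : Fin n → ℝ) : ℝ :=
  fFun A c v / edot v v

/-- The Toh matrix `A(ω, ε)`. -/
noncomputable def tohMatrix (ω ε : ℝ) : Matrix (Fin 4) (Fin 4) ℝ :=
  !![1, ε, 0, 0; 0, -1, ω / ε, 0; 0, 0, 1, ε; 0, 0, 0, -1]

/-- `p` is a `k`-th worst-case GMRES polynomial of `A`. -/
def IsWCPoly {ι : Type*} [Fintype ι] [DecidableEq ι]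
    (A : Matrix ι ι ℝ) (k : ℕ) (p : Polynomial ℝ) : Prop :=
  IsPik k p ∧ ∃ b : ι → ℝ, euclNorm b = 1 ∧
    (∀ q : Polynomial ℝ, IsPik k q →
      euclNorm ((Polynomial.aeval A p).mulVec b) ≤ euclNorm ((Polynomial.aeval A q).mulVec b)) ∧
    euclNorm ((Polynomial.aeval A p).mulVec b) = Psi A k

/-- The spectral (Euclidean operator) norm of a real matrix. -/
noncomputable def specNorm {ι : Type*} [Fintype ι] (M : Matrix ι ι ℝ) : ℝ :=
  sSup {r : ℝ | ∃ v : ι → ℝ, euclNorm v = 1 ∧ r = euclNorm (M *ᵥ v)}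

/-- The `k`-th ideal GMRES approximation `φ_k(A) = min_{p ∈ π_k} ‖p(A)‖`. -/
noncomputable def phiIdeal {ι : Type*} [Fintype ι] [DecidableEq ι]
    (A : Matrix ι ι ℝ) (k : ℕ) : ℝ :=
  sInf {r : ℝ | ∃ p : Polynomial ℝ, IsPik k p ∧ r = specNorm (Polynomial.aeval A p)}

/-- Complexification of a real matrix. -/
noncomputable def matC {ι : Type*} (A : Matrix ι ι ℝ) : Matrix ι ι ℂ :=
  A.map fun x => (x : ℂ)

/-- Complexification of a real vector. -/
noncomputable def vecC {ι : Type*} (b : ι → ℝ) : ι → ℂ := fun i => (b i : ℂ)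

/-- `Ψ_{k,ℂ,ℝ}(A)`: complex polynomials, real initial vectors. -/
noncomputable def PsiCR {ι : Type*} [Fintype ι] [DecidableEq ι]
    (A : Matrix ι ι ℝ) (k : ℕ) : ℝ :=
  sSup {r : ℝ | ∃ b : ι → ℝ, euclNorm b = 1 ∧
    r = sInf {s : ℝ | ∃ p : Polynomial ℂ, IsPikC k p ∧
      s = euclNormC ((Polynomial.aeval (matC A) p).mulVec (vecC b))}}

/-- `Ψ_{k,ℂ,ℂ}(A)`: complex polynomials, complex initial vectors. -/
noncomputable def PsiCC {ι : Type*} [Fintype ι] [DecidableEq ι]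
    (A : Matrix ι ι ℝ) (k : ℕ) : ℝ :=
  sSup {r : ℝ | ∃ b : ι → ℂ, euclNormC b = 1 ∧
    r = sInf {s : ℝ | ∃ p : Polynomial ℂ, IsPikC k p ∧
      s = euclNormC ((Polynomial.aeval (matC A) p).mulVec b)}}

/-- `Ψ_{k,ℝ,ℂ}(A)`: real polynomials, complex initial vectors. -/
noncomputable def PsiRC {ι : Type*} [Fintype ι] [DecidableEq ι]
    (A : Matrix ι ι ℝ) (k : ℕ) : ℝ :=
  sSup {r : ℝ | ∃ b : ι → ℂ, euclNormC b = 1 ∧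
    r = sInf {s : ℝ | ∃ p : Polynomial ℝ, IsPik k p ∧
      s = euclNormC ((Polynomial.aeval (matC A) (p.map (algebraMap ℝ ℂ))).mulVec b)}}

/-- `φ_{k,ℝ,ℝ}(A)`. -/
noncomputable def phiRR {ι : Type*} [Fintype ι] [DecidableEq ι]
    (A : Matrix ι ι ℝ) (k : ℕ) : ℝ :=
  sInf {r : ℝ | ∃ p : Polynomial ℝ, IsPik k p ∧
    r = sSup {s : ℝ | ∃ b : ι → ℝ, euclNorm b = 1 ∧
      s = euclNorm ((Polynomial.aeval A p).mulVec b)}}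

/-- `φ_{k,ℂ,ℝ}(A)`. -/
noncomputable def phiCR {ι : Type*} [Fintype ι] [DecidableEq ι]
    (A : Matrix ι ι ℝ) (k : ℕ) : ℝ :=
  sInf {r : ℝ | ∃ p : Polynomial ℂ, IsPikC k p ∧
    r = sSup {s : ℝ | ∃ b : ι → ℝ, euclNorm b = 1 ∧
      s = euclNormC ((Polynomial.aeval (matC A) p).mulVec (vecC b))}}

/-- `φ_{k,ℝ,ℂ}(A)`. -/
noncomputable def phiRC {ι : Type*} [Fintype ι] [DecidableEq ι]
    (A : Matrix ι ι ℝ) (k : ℕ) : ℝ :=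
  sInf {r : ℝ | ∃ p : Polynomial ℝ, IsPik k p ∧
    r = sSup {s : ℝ | ∃ b : ι → ℂ, euclNormC b = 1 ∧
      s = euclNormC ((Polynomial.aeval (matC A) (p.map (algebraMap ℝ ℂ))).mulVec b)}}

/-- `φ_{k,ℂ,ℂ}(A)`. -/
noncomputable def phiCC {ι : Type*} [Fintype ι] [DecidableEq ι]
    (A : Matrix ι ι ℝ) (k : ℕ) : ℝ :=
  sInf {r : ℝ | ∃ p : Polynomial ℂ, IsPikC k p ∧
    r = sSup {s : ℝ | ∃ b : ι → ℂ, euclNormC b = 1 ∧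
      s = euclNormC ((Polynomial.aeval (matC A) p).mulVec b)}}

/-!
The GMRES residual `r = p(A) b` is orthogonal to all differences `q(A) b - p(A) b` with `q ∈ π_k`,
so `⟨q(Aᵀ) r, b⟩ = ⟨r, q(A) b⟩ = ‖r‖²` for every `q ∈ π_k`. By Cauchy–Schwarz, a GMRES step
for `Aᵀ` started from `r / ‖r‖` leaves a residual `s` of norm at least `‖r‖`; running the argument
once more for `A` started from `s / ‖s‖` gives `‖r‖ ≤ ‖s‖ ≤ Ψ_k(A)`. If `‖r‖ = Ψ_k(A)`, all of
these are equalities, and `⟨s, b⟩ = ‖s‖` with `‖b‖ = 1` is the equality case of Cauchy–Schwarz.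

The normalizations are legitimate because `Ψ_k(A) > 0` for `k < d(A)`: some vector is annihilated
by `p(A)` only for multiples `p` of the minimal polynomial of `A`, so none of its `k`-th GMRES
residuals vanishes.
-/

section InnerProductSpace

variable {E : Type*} [NormedAddCommGroup E] [InnerProductSpace ℝ E]

open scoped RealInnerProductSpace

theorem real_inner_eq_zero_of_forall_norm_le_norm_add_smul {x u : E}
    (h : ∀ t : ℝ, ‖x‖ ≤ ‖x + t • u‖) : ⟪x, u⟫ = 0 := by
  have quadratic_nonneg : ∀ t : ℝ, 0 ≤ ‖u‖ ^ 2 * (t * t) + 2 * ⟪x, u⟫ * t + 0 := fun t => by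
    have hsq := pow_le_pow_left₀ (norm_nonneg x) (h t) 2
    rw [norm_add_sq_real, real_inner_smul_right, norm_smul, mul_pow, Real.norm_eq_abs, sq_abs]
      at hsq
    linarith
  have hdiscrim := discrim_le_zero quadratic_nonneg
  rw [discrim, mul_zero, sub_zero] at hdiscrim
  linarith [sq_nonpos_iff _ |>.1 hdiscrim]

theorem forall_norm_le_norm_add_iff_mem_orthogonal (U : Submodule ℝ E) (x : E) :
    (∀ u ∈ U, ‖x‖ ≤ ‖x + u‖) ↔ x ∈ Uᗮ := by
  rw [Submodule.mem_orthogonal']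
  refine ⟨fun h u hu => real_inner_eq_zero_of_forall_norm_le_norm_add_smul
    fun t => h _ (U.smul_mem t hu), fun h u hu => ?_⟩
  rw [mul_self_le_mul_self_iff (norm_nonneg _) (norm_nonneg _),
    norm_add_sq_eq_norm_sq_add_norm_sq_real (h u hu)]
  exact le_add_of_nonneg_right (mul_self_nonneg _)

end InnerProductSpace

theorem exists_forall_minpoly_dvd {K V : Type*} [Field K] [AddCommGroup V] [Module K V]
    [FiniteDimensional K V] (f : Module.End K V) :
    ∃ v : V, ∀ q : K[X], aeval f q v = 0 → minpoly K f ∣ q := by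
  obtain ⟨x, hx⟩ := Module.exists_ker_toSpanSingleton_eq_annihilator K[X] (Module.AEval' f)
  obtain ⟨v, rfl⟩ := (Module.AEval'.of f).surjective x
  refine ⟨v, fun q hq => minpoly.dvd K f ?_⟩
  have hq_ker : q ∈ LinearMap.ker (LinearMap.toSpanSingleton K[X] _ (Module.AEval'.of f v)) := by
    rw [LinearMap.mem_ker, LinearMap.toSpanSingleton_apply, ← Module.AEval.of_aeval_smul,
      Module.End.smul_def, hq, map_zero]
  rwa [hx, Module.AEval.annihilator_eq_ker_aeval, RingHom.mem_ker] at hq_ker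

theorem aeval_transpose {ι R : Type*} [Fintype ι] [DecidableEq ι] [CommSemiring R]
    (A : Matrix ι ι R) (p : R[X]) : aeval Aᵀ p = (aeval A p)ᵀ := by
  induction p using Polynomial.induction_on' with
  | add p q hp hq => simp only [map_add, hp, hq, transpose_add]
  | monomial m a =>
    simp only [aeval_monomial, Algebra.algebraMap_eq_smul_one, smul_mul_assoc, one_mul,
      transpose_smul, transpose_pow]

section Euclidean

variable {ι : Type*} [Fintype ι]

theorem euclNorm_eq_norm (v : ι → ℝ) : euclNorm v = ‖WithLp.toLp 2 v‖ := by
  simp only [euclNorm, EuclideanSpace.norm_eq, Real.norm_eq_abs, sq_abs]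

theorem euclNorm_pos {v : ι → ℝ} (hv : v ≠ 0) : 0 < euclNorm v := by
  rwa [euclNorm_eq_norm, norm_pos_iff, ne_eq, WithLp.toLp_eq_zero]

theorem dotProduct_eq_inner (u v : ι → ℝ) :
    u ⬝ᵥ v = inner ℝ (WithLp.toLp 2 u) (WithLp.toLp 2 v) := by
  rw [EuclideanSpace.inner_toLp_toLp, star_trivial, dotProduct_comm]

theorem dotProduct_self_eq_euclNorm_sq (v : ι → ℝ) : v ⬝ᵥ v = euclNorm v ^ 2 := by
  rw [dotProduct_eq_inner, real_inner_self_eq_norm_sq, euclNorm_eq_norm]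

theorem dotProduct_le_euclNorm_mul_euclNorm (u v : ι → ℝ) :
    u ⬝ᵥ v ≤ euclNorm u * euclNorm v := by
  simpa only [dotProduct_eq_inner, euclNorm_eq_norm] using real_inner_le_norm _ _

theorem eq_euclNorm_smul_of_dotProduct_eq {u v : ι → ℝ} (hv : euclNorm v = 1)
    (h : u ⬝ᵥ v = euclNorm u) : u = euclNorm u • v := by
  rw [euclNorm_eq_norm] at hv h ⊢
  rw [dotProduct_eq_inner] at h
  have parallel := inner_eq_norm_mul_iff_real.1 (h.trans (by rw [hv, mul_one]))
  rw [hv, one_smul] at parallel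
  exact WithLp.toLp_injective 2 parallel

theorem euclNorm_inv_smul_self {v : ι → ℝ} (hv : 0 < euclNorm v) :
    euclNorm ((euclNorm v)⁻¹ • v) = 1 := by
  rw [euclNorm_eq_norm] at hv
  rw [euclNorm_eq_norm, euclNorm_eq_norm, WithLp.toLp_smul]
  exact norm_smul_inv_norm (𝕜 := ℝ) (norm_pos_iff.1 hv)

end Euclidean

/-- The direction of the affine space `π_k`: real polynomials of degree at most `k` vanishing at
the origin. -/
noncomputable def pikDirection (k : ℕ) : Submodule ℝ ℝ[X] :=
  degreeLE ℝ k ⊓ LinearMap.ker (leval (0 : ℝ))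

theorem mem_pikDirection {k : ℕ} {q : ℝ[X]} :
    q ∈ pikDirection k ↔ q.natDegree ≤ k ∧ q.eval 0 = 0 := by
  rw [pikDirection, Submodule.mem_inf, mem_degreeLE, natDegree_le_iff_degree_le,
    LinearMap.mem_ker, leval_apply]

theorem isPik_one (k : ℕ) : IsPik k 1 := ⟨by simp, by simp⟩

theorem IsPik.add_of_mem_pikDirection {k : ℕ} {p q : ℝ[X]} (hp : IsPik k p)
    (hq : q ∈ pikDirection k) : IsPik k (p + q) := by
  rw [mem_pikDirection] at hq
  exact ⟨natDegree_add_le_of_degree_le hp.1 hq.1, by rw [eval_add, hp.2, hq.2, add_zero]⟩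

theorem IsPik.sub_mem_pikDirection {k : ℕ} {p q : ℝ[X]} (hp : IsPik k p) (hq : IsPik k q) :
    p - q ∈ pikDirection k :=
  mem_pikDirection.2
    ⟨(natDegree_sub_le_of_le hp.1 hq.1).trans_eq (max_self k),
      by rw [eval_sub, hp.2, hq.2, sub_self]⟩

section Gmres

variable {ι : Type*} [Fintype ι] [DecidableEq ι] {A : Matrix ι ι ℝ} {k : ℕ} {b r s : ι → ℝ}

/-- The map `p ↦ p(A) b`, with values in Euclidean space so that the inner product theory
applies. -/
noncomputable def aevalMulVec (A : Matrix ι ι ℝ) (b : ι → ℝ) : ℝ[X] →ₗ[ℝ] EuclideanSpace ℝ ι :=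
  (WithLp.linearEquiv 2 ℝ (ι → ℝ)).symm.toLinearMap ∘ₗ
    (Matrix.mulVecBilin ℝ ℝ).flip b ∘ₗ (aeval A).toLinearMap

theorem aevalMulVec_apply (A : Matrix ι ι ℝ) (b : ι → ℝ) (p : ℝ[X]) :
    aevalMulVec A b p = WithLp.toLp 2 (aeval A p *ᵥ b) := rfl

theorem aevalMulVec_one (A : Matrix ι ι ℝ) (b : ι → ℝ) :
    aevalMulVec A b 1 = WithLp.toLp 2 b := by
  rw [aevalMulVec_apply, map_one, one_mulVec]

/-- The space `A K_k(A, b)` of corrections available to the `k`-th GMRES step, written through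
polynomials as `{q(A) b : deg q ≤ k, q(0) = 0}`. -/
noncomputable def gmresCorrections (A : Matrix ι ι ℝ) (k : ℕ) (b : ι → ℝ) :
    Submodule ℝ (EuclideanSpace ℝ ι) :=
  (pikDirection k).map (aevalMulVec A b)

theorem isGmresRes_iff_mem_orthogonal :
    IsGmresRes A k b r ↔
      WithLp.toLp 2 r - WithLp.toLp 2 b ∈ gmresCorrections A k b ∧
        WithLp.toLp 2 r ∈ (gmresCorrections A k b)ᗮ := by
  rw [← forall_norm_le_norm_add_iff_mem_orthogonal]
  constructor
  · rintro ⟨p, hp, rfl, hmin⟩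
    refine ⟨⟨p - 1, hp.sub_mem_pikDirection (isPik_one k), ?_⟩, ?_⟩
    · rw [map_sub, aevalMulVec_one, aevalMulVec_apply]
    · rintro _ ⟨q, hq, rfl⟩
      have hle := hmin (p + q) (hp.add_of_mem_pikDirection hq)
      rwa [euclNorm_eq_norm, euclNorm_eq_norm, ← aevalMulVec_apply, ← aevalMulVec_apply,
        map_add] at hle
  · rintro ⟨⟨q, hq, hqr⟩, hmin⟩
    have hr : aevalMulVec A b (1 + q) = WithLp.toLp 2 r := by
      rw [map_add, aevalMulVec_one, hqr, add_sub_cancel]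
    have hp : IsPik k (1 + q) := (isPik_one k).add_of_mem_pikDirection hq
    refine ⟨1 + q, hp, (WithLp.toLp_injective 2 hr).symm, fun q' hq' => ?_⟩
    have hle := hmin _ (Submodule.mem_map_of_mem (hq'.sub_mem_pikDirection hp))
    rwa [map_sub, hr, add_sub_cancel, aevalMulVec_apply, ← euclNorm_eq_norm,
      ← euclNorm_eq_norm] at hle

theorem exists_isGmresRes (A : Matrix ι ι ℝ) (k : ℕ) (b : ι → ℝ) : ∃ r, IsGmresRes A k b r := by
  let U := gmresCorrections A k b
  let x : EuclideanSpace ℝ ι := WithLp.toLp 2 b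
  refine ⟨WithLp.ofLp (x - U.starProjection x), isGmresRes_iff_mem_orthogonal.2 ⟨?_, ?_⟩⟩
  · rw [WithLp.toLp_ofLp, sub_sub_cancel_left]
    exact U.neg_mem (U.starProjection_apply_mem x)
  · exact U.sub_starProjection_mem_orthogonal x

theorem IsGmresRes.gmresVal_eq (hr : IsGmresRes A k b r) : gmresVal A k b = euclNorm r := by
  obtain ⟨p, hp, hrp, hmin⟩ := hr
  refine IsLeast.csInf_eq ⟨⟨p, hp, congrArg euclNorm hrp⟩, ?_⟩
  rintro _ ⟨q, hq, rfl⟩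
  exact hmin q hq

theorem gmresVal_le_euclNorm (A : Matrix ι ι ℝ) (k : ℕ) (v : ι → ℝ) :
    gmresVal A k v ≤ euclNorm v := by
  obtain ⟨r, hr⟩ := exists_isGmresRes A k v
  rw [hr.gmresVal_eq]
  obtain ⟨p, -, -, hmin⟩ := hr
  simpa only [map_one, one_mulVec] using hmin 1 (isPik_one k)

theorem gmresVal_le_Psi (A : Matrix ι ι ℝ) (k : ℕ) {v : ι → ℝ} (hv : euclNorm v = 1) :
    gmresVal A k v ≤ Psi A k := by
  refine le_csSup ⟨1, ?_⟩ ⟨v, hv, rfl⟩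
  rintro _ ⟨u, hu, rfl⟩
  exact (gmresVal_le_euclNorm A k u).trans_eq hu

theorem exists_forall_isPik_aeval_mulVec_ne_zero (hk : k < dA A) :
    ∃ v : ι → ℝ, ∀ p, IsPik k p → aeval A p *ᵥ v ≠ 0 := by
  obtain ⟨v, hv⟩ := exists_forall_minpoly_dvd (toLin' A)
  refine ⟨v, fun p hp hpv => ?_⟩
  have hp0 : p ≠ 0 := by
    rintro rfl
    exact zero_ne_one (eval_zero.symm.trans hp.2)
  have haeval : aeval (toLin' A) p = toLin' (aeval A p) :=
    aeval_algHom_apply (toLinAlgEquiv' : Matrix ι ι ℝ ≃ₐ[ℝ] _).toAlgHom A p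
  have hdvd : minpoly ℝ A ∣ p := by
    rw [← minpoly_toLin']
    exact hv p (by rw [haeval, toLin'_apply, hpv])
  exact (hk.trans_le (natDegree_le_of_dvd hdvd hp0)).not_ge hp.1

theorem Psi_pos (hk : k < dA A) : 0 < Psi A k := by
  obtain ⟨v, hv⟩ := exists_forall_isPik_aeval_mulVec_ne_zero hk
  have hvpos : 0 < euclNorm v := euclNorm_pos (by simpa using hv 1 (isPik_one k))
  obtain ⟨r, hr⟩ := exists_isGmresRes A k ((euclNorm v)⁻¹ • v)
  refine lt_of_lt_of_le ?_ (gmresVal_le_Psi A k (euclNorm_inv_smul_self hvpos))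
  rw [hr.gmresVal_eq]
  obtain ⟨p, hp, rfl, -⟩ := hr
  rw [mulVec_smul]
  exact euclNorm_pos (smul_ne_zero (inv_ne_zero hvpos.ne') (hv p hp))

theorem IsGmresRes.aeval_transpose_mulVec_dotProduct (hr : IsGmresRes A k b r) {q : ℝ[X]}
    (hq : IsPik k q) : aeval Aᵀ q *ᵥ r ⬝ᵥ b = euclNorm r ^ 2 := by
  have horth := (isGmresRes_iff_mem_orthogonal.1 hr).2
  obtain ⟨p, hp, hrp, -⟩ := hr
  have hdiff := Submodule.inner_left_of_mem_orthogonal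
    (Submodule.mem_map_of_mem (hq.sub_mem_pikDirection hp)) horth
  rw [map_sub, inner_sub_right, aevalMulVec_apply, aevalMulVec_apply, ← hrp,
    ← dotProduct_eq_inner, ← dotProduct_eq_inner, sub_eq_zero] at hdiff
  rw [aeval_transpose, mulVec_transpose, ← dotProduct_mulVec, hdiff,
    dotProduct_self_eq_euclNorm_sq]

theorem IsGmresRes.dotProduct_eq_euclNorm (hr : IsGmresRes A k b r)
    (hs : IsGmresRes Aᵀ k ((euclNorm r)⁻¹ • r) s) : s ⬝ᵥ b = euclNorm r := by
  obtain ⟨q, hq, rfl, -⟩ := hs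
  rw [mulVec_smul, smul_dotProduct, hr.aeval_transpose_mulVec_dotProduct hq, smul_eq_mul, sq,
    ← mul_assoc, inv_mul_mul_self]

theorem IsGmresRes.euclNorm_le_gmresVal_transpose (hr : IsGmresRes A k b r)
    (hb : euclNorm b = 1) : euclNorm r ≤ gmresVal Aᵀ k ((euclNorm r)⁻¹ • r) := by
  obtain ⟨s, hs⟩ := exists_isGmresRes Aᵀ k ((euclNorm r)⁻¹ • r)
  rw [hs.gmresVal_eq]
  simpa only [hr.dotProduct_eq_euclNorm hs, hb, mul_one] using
    dotProduct_le_euclNorm_mul_euclNorm s b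

end Gmres

theorem worst_case_cross_equality_general {ι : Type*} [Fintype ι] [DecidableEq ι]
    {A : Matrix ι ι ℝ} {k : ℕ} (hΨ : 0 < Psi A k) {b r s : ι → ℝ} (hb : euclNorm b = 1)
    (hr : IsGmresRes A k b r) (hwc : euclNorm r = Psi A k)
    (hs : IsGmresRes Aᵀ k ((euclNorm r)⁻¹ • r) s) :
    euclNorm s = euclNorm r ∧ euclNorm r = Psi A k ∧ b = (Psi A k)⁻¹ • s := by
  have hrpos : 0 < euclNorm r := hwc ▸ hΨ
  have hrs : euclNorm r ≤ euclNorm s :=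
    (hr.euclNorm_le_gmresVal_transpose hb).trans_eq hs.gmresVal_eq
  have hspos : 0 < euclNorm s := hrpos.trans_le hrs
  have hsr : euclNorm s ≤ euclNorm r :=
    calc euclNorm s
      _ ≤ gmresVal Aᵀᵀ k ((euclNorm s)⁻¹ • s) :=
        hs.euclNorm_le_gmresVal_transpose (euclNorm_inv_smul_self hrpos)
      _ ≤ Psi Aᵀᵀ k := gmresVal_le_Psi Aᵀᵀ k (euclNorm_inv_smul_self hspos)
      _ = euclNorm r := by rw [transpose_transpose, hwc]
  have heq : euclNorm s = euclNorm r := hsr.antisymm hrs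
  have hsb : s = euclNorm s • b :=
    eq_euclNorm_smul_of_dotProduct_eq hb ((hr.dotProduct_eq_euclNorm hs).trans heq.symm)
  refine ⟨heq, hwc, ?_⟩
  rw [← hwc, ← heq, eq_inv_smul_iff₀ hspos.ne', ← hsb]

/-- If `b` is a unit norm `k`-th worst-case GMRES initial vector,
`r = GMRES(A,b,k)` and `s = GMRES(Aᵀ, r/‖r‖, k)`, then
`‖s‖ = ‖r‖ = Ψ_k(A)` and `b = s/Ψ_k(A)`. -/
theorem worst_case_cross_equality {n : ℕ} (A : Matrix (Fin n) (Fin n) ℝ)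
    (hA : IsUnit A) (k : ℕ) (hk1 : 1 ≤ k) (hk2 : k ≤ dA A - 1)
    (b r s : Fin n → ℝ) (hb : euclNorm b = 1)
    (hr : IsGmresRes A k b r) (hwc : euclNorm r = Psi A k)
    (hs : IsGmresRes Aᵀ k ((euclNorm r)⁻¹ • r) s) :
    euclNorm s = euclNorm r ∧ euclNorm r = Psi A k ∧ b = (Psi A k)⁻¹ • s :=
  worst_case_cross_equality_general (Psi_pos (by lia)) hb hr hwc hs
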